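/- For every integer n ≥ 3 and every d ∈ {0, 1, 2}, there exists a matrix A ∈ C_n with rank A = 2 such that the face of C_n generated by A has dimension exactly d. -/

import Mathlib

open Matrix
open scoped ComplexOrder

noncomputable section

/-- `Cset n` is the set of n²×n² complex positive semidefinite matrices, written in block
form with blocks indexed by pairs `(i,k)` (block row `i`, inner row `k`), whose `(i,j)`
blocks have trace `δ_{ij}`.  It corresponds to the set of quantum channels via the Choi
matrix. -/
def Cset (n : ℕ) : Set (Matrix (Fin n × Fin n) (Fin n × Fin n) ℂ) :=
  {A | A.PosSemidef ∧
    ∀ i j : Fin n, ∑ k : Fin n, A (i, k) (j, k) = if i = j then 1 else 0}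

/-- `F` is a face of the convex set `C`: a convex subset such that whenever a point of `F`
lies in the open segment between two points of `C`, both endpoints lie in `F`. -/
def IsFace {V : Type*} [AddCommGroup V] [Module ℝ V] (C F : Set V) : Prop :=
  F ⊆ C ∧ Convex ℝ F ∧
    ∀ x ∈ C, ∀ y ∈ C, ∀ t : ℝ, 0 < t → t < 1 → t • x + (1 - t) • y ∈ F → x ∈ F ∧ y ∈ F

/-- The face of `C` generated by `A`: the smallest face of `C` containing `A`. -/
def faceGen {V : Type*} [AddCommGroup V] [Module ℝ V] (C : Set V) (A : V) : Set V :=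
  ⋂₀ {F : Set V | IsFace C F ∧ A ∈ F}

/-- The dimension of a face: the dimension of its affine hull as a real affine subspace. -/
def faceDim {V : Type*} [AddCommGroup V] [Module ℝ V] (F : Set V) : ℕ :=
  Module.finrank ℝ ↥(vectorSpan ℝ F)

/-!
A matrix of `C_n` is the Choi matrix `A = F Fᴴ` of a channel, where the columns of `F` are its
vectorized, linearly independent Kraus operators `K_a`, normalized by `∑ K_aᴴ K_a = 1`. A matrix in
the face generated by `A` vanishes on the kernel of `A`, hence has the form `F H Fᴴ`; conversely
`F (1 ± ε H) Fᴴ` is positive semidefinite for every Hermitian `H` and small `ε`. So the dimension of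
the face is that of the real space of Hermitian `H` with `∑ H_{ab} K_bᴴ K_a = 0`.

For two Kraus operators `V`, `W`, each killing a vector on which the other does not vanish, such an
`H` has zero diagonal, and the space becomes `{z : ℂ | z T is skew-adjoint}` with `T = Vᴴ W`. Its
dimension is 2 if `T = 0`, 1 if `T ≠ 0` is self-adjoint, and 0 if `T ≠ 0` and `T² = 0`. These occur
for `(P, 1 - P)` with a projection `P`, for commuting diagonal matrices, and for `(P, U (1 - P))`
with a unitary `U` not preserving the kernel of `P`.
-/

section Faces

variable {V : Type*} [AddCommGroup V] [Module ℝ V] {C F : Set V} {A v : V}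

lemma self_mem_faceGen (C : Set V) (A : V) : A ∈ faceGen C A := fun _ hF => hF.2

lemma faceGen_subset (hF : IsFace C F) (hA : A ∈ F) : faceGen C A ⊆ F :=
  fun _ hB => hB F ⟨hF, hA⟩

lemma mem_vectorSpan_faceGen_of_add_mem_of_sub_mem (hadd : A + v ∈ C) (hsub : A - v ∈ C) :
    v ∈ vectorSpan ℝ (faceGen C A) := by
  have midpoint : (1 / 2 : ℝ) • (A + v) + (1 - 1 / 2 : ℝ) • (A - v) = A := by module
  have hv : A + v ∈ faceGen C A := fun F ⟨hF, hA⟩ =>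
    (hF.2.2 _ hadd _ hsub (1 / 2) (by norm_num) (by norm_num) (midpoint.symm ▸ hA)).1
  simpa using vsub_mem_vectorSpan ℝ hv (self_mem_faceGen C A)

end Faces

section PosSemidef

variable {m r : Type*} [Fintype m]

lemma mulVec_eq_zero_of_add_mulVec_eq_zero {𝕜 : Type*} [RCLike 𝕜] {A B : Matrix m m 𝕜}
    (hA : A.PosSemidef) (hB : B.PosSemidef) {u : m → 𝕜} (hu : (A + B) *ᵥ u = 0) :
    A *ᵥ u = 0 ∧ B *ᵥ u = 0 := by
  have hsum : star u ⬝ᵥ A *ᵥ u + star u ⬝ᵥ B *ᵥ u = 0 := by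
    rw [← dotProduct_add, ← add_mulVec, hu, dotProduct_zero]
  obtain ⟨hAu, hBu⟩ := (add_eq_zero_iff_of_nonneg (hA.dotProduct_mulVec_nonneg u)
    (hB.dotProduct_mulVec_nonneg u)).1 hsum
  exact ⟨(hA.dotProduct_mulVec_zero_iff u).1 hAu, (hB.dotProduct_mulVec_zero_iff u).1 hBu⟩

lemma exists_mul_eq_one_of_linearIndependent_col {𝕜 : Type*} [Field 𝕜] [Finite r] [DecidableEq r]
    {K : Matrix m r 𝕜} (hK : LinearIndependent 𝕜 K.col) : ∃ J : Matrix r m 𝕜, J * K = 1 := by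
  classical
  cases nonempty_fintype r
  have hinj : LinearMap.ker (toLin' K) = ⊥ := LinearMap.ker_eq_bot.2 (mulVec_injective_iff.2 hK)
  obtain ⟨g, hg⟩ := (toLin' K).exists_leftInverse_of_injective hinj
  exact ⟨LinearMap.toMatrix' g, by
    simpa only [LinearMap.toMatrix'_comp, LinearMap.toMatrix'_toLin', LinearMap.toMatrix'_id]
      using congrArg LinearMap.toMatrix' hg⟩

lemma exists_isHermitian_eq_mul_mul_conjTranspose {𝕜 : Type*} [Field 𝕜] [StarRing 𝕜] [Fintype r]
    {K : Matrix m r 𝕜} (hK : LinearIndependent 𝕜 K.col) {B : Matrix m m 𝕜} (hB : B.IsHermitian)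
    (hker : ∀ u, Kᴴ *ᵥ u = 0 → B *ᵥ u = 0) :
    ∃ H : Matrix r r 𝕜, H.IsHermitian ∧ K * H * Kᴴ = B := by
  classical
  obtain ⟨J, hJ⟩ := exists_mul_eq_one_of_linearIndependent_col hK
  have hJ' : Kᴴ * Jᴴ = 1 := by rw [← conjTranspose_mul, hJ, conjTranspose_one]
  have hright : B * (Jᴴ * Kᴴ) = B := by
    refine (sub_eq_zero.1 (Matrix.ext_of_mulVec_single fun i => ?_)).symm
    rw [← B.mul_one, Matrix.mul_assoc, Matrix.one_mul, ← Matrix.mul_sub, ← mulVec_mulVec,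
      zero_mulVec]
    refine hker _ ?_
    rw [mulVec_mulVec, Matrix.mul_sub, ← Matrix.mul_assoc, hJ', Matrix.mul_one, Matrix.one_mul,
      sub_self, zero_mulVec]
  have hleft : K * J * B = B := by
    simpa only [conjTranspose_mul, conjTranspose_conjTranspose, hB.eq]
      using congrArg conjTranspose hright
  refine ⟨J * B * Jᴴ, isHermitian_mul_mul_conjTranspose J hB, ?_⟩
  calc K * (J * B * Jᴴ) * Kᴴ = K * J * (B * (Jᴴ * Kᴴ)) := by simp only [Matrix.mul_assoc]
    _ = B := by rw [hright, hleft]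

end PosSemidef

open scoped MatrixOrder Matrix.Norms.L2Operator in
lemma exists_pos_posSemidef_one_add_smul_one_sub_smul {r : Type*} [Finite r] [DecidableEq r]
    {H : Matrix r r ℂ} (hH : H.IsHermitian) :
    ∃ ε : ℝ, 0 < ε ∧ (1 + ε • H).PosSemidef ∧ (1 - ε • H).PosSemidef := by
  cases nonempty_fintype r
  have hH' : IsSelfAdjoint H := hH
  set ε : ℝ := (‖H‖ + 1)⁻¹
  have hε : 0 < ε := by positivity
  have hsa : IsSelfAdjoint (ε • H) := (IsSelfAdjoint.all ε).smul hH'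
  have hnorm : ‖ε • H‖ ≤ 1 := by
    rw [norm_smul, Real.norm_of_nonneg hε.le, inv_mul_le_one₀ (by positivity)]
    linarith
  have hle : algebraMap ℝ (Matrix r r ℂ) ‖ε • H‖ ≤ 1 := by
    simpa using algebraMap_mono (Matrix r r ℂ) hnorm
  refine ⟨ε, hε, ?_, Matrix.le_iff.1 (hsa.le_algebraMap_norm_self.trans hle)⟩
  simpa only [sub_neg_eq_add, add_comm] using
    Matrix.le_iff.1 ((neg_le_neg hle).trans hsa.neg_algebraMap_norm_le_self)

section Spectrahedron

variable {m r E : Type*} [AddCommGroup E] [Module ℝ E]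

/-- The spectrahedron cut out of the cone of positive semidefinite matrices by the real-linear
equation `L A = b`; `Cset n` is an instance, with `L` the matrix of block traces and `b = 1`. -/
def spectrahedron (L : Matrix m m ℂ →ₗ[ℝ] E) (b : E) : Set (Matrix m m ℂ) :=
  {A | A.PosSemidef ∧ L A = b}

lemma convex_spectrahedron (L : Matrix m m ℂ →ₗ[ℝ] E) (b : E) :
    Convex ℝ (spectrahedron L b) := by
  rintro A ⟨hA, hLA⟩ B ⟨hB, hLB⟩ s t hs ht hst
  refine ⟨(hA.smul hs).add (hB.smul ht), ?_⟩
  rw [map_add, map_smul, map_smul, hLA, hLB, ← add_smul, hst, one_smul]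

lemma isFace_spectrahedron_inter_mulVec_eq_zero [Fintype m] (L : Matrix m m ℂ →ₗ[ℝ] E) (b : E)
    (N : Set (m → ℂ)) :
    IsFace (spectrahedron L b) (spectrahedron L b ∩ {B | ∀ u ∈ N, B *ᵥ u = 0}) := by
  refine ⟨Set.inter_subset_left, (convex_spectrahedron L b).inter ?_, ?_⟩
  · intro A hA B hB s t _ _ _ u hu
    rw [add_mulVec, smul_mulVec, smul_mulVec, hA u hu, hB u hu, smul_zero, smul_zero, add_zero]
  · intro A hA B hB t ht ht1 hAB
    have ht1' : 0 < 1 - t := sub_pos.2 ht1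
    have hker (u) (hu : u ∈ N) : t • A *ᵥ u = 0 ∧ (1 - t) • B *ᵥ u = 0 := by
      simpa only [smul_mulVec] using mulVec_eq_zero_of_add_mulVec_eq_zero (hA.1.smul ht.le)
        (hB.1.smul ht1'.le) (hAB.2 u hu)
    exact ⟨⟨hA, fun u hu => (smul_eq_zero_iff_right ht.ne').1 (hker u hu).1⟩,
      ⟨hB, fun u hu => (smul_eq_zero_iff_right ht1'.ne').1 (hker u hu).2⟩⟩

variable [Fintype r]

/-- The real-linear map `H ↦ K H Kᴴ`. It parametrizes the directions of the face generated
by `K Kᴴ`. -/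
def congruence (K : Matrix m r ℂ) : Matrix r r ℂ →ₗ[ℝ] Matrix m m ℂ :=
  mulRightLinearMap m ℝ Kᴴ ∘ₗ mulLeftLinearMap r ℝ K

lemma congruence_apply (K : Matrix m r ℂ) (H : Matrix r r ℂ) : congruence K H = K * H * Kᴴ := rfl

lemma congruence_injective [Finite m] {K : Matrix m r ℂ} (hK : LinearIndependent ℂ K.col) :
    Function.Injective (congruence K) := by
  classical
  cases nonempty_fintype m
  obtain ⟨J, hJ⟩ := exists_mul_eq_one_of_linearIndependent_col hK
  refine Function.LeftInverse.injective (g := congruence J) fun H => ?_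
  calc J * (K * H * Kᴴ) * Jᴴ = J * K * H * (J * K)ᴴ := by
        simp only [conjTranspose_mul, Matrix.mul_assoc]
    _ = H := by rw [hJ, conjTranspose_one, Matrix.one_mul, Matrix.mul_one]

variable {L : Matrix m m ℂ →ₗ[ℝ] E} {b : E} {K : Matrix m r ℂ}

lemma vectorSpan_faceGen_spectrahedron_le [Finite m] (hK : LinearIndependent ℂ K.col)
    (hb : L (K * Kᴴ) = b) :
    vectorSpan ℝ (faceGen (spectrahedron L b) (K * Kᴴ)) ≤
      (selfAdjoint.submodule ℝ (Matrix r r ℂ) ⊓ LinearMap.ker (L ∘ₗ congruence K)).map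
        (congruence K) := by
  cases nonempty_fintype m
  have hKK : K * Kᴴ ∈ spectrahedron L b ∩ {B | ∀ u ∈ {u | Kᴴ *ᵥ u = 0}, B *ᵥ u = 0} :=
    ⟨⟨posSemidef_self_mul_conjTranspose K, hb⟩, fun u (hu : Kᴴ *ᵥ u = 0) => by
      rw [← mulVec_mulVec, hu, mulVec_zero]⟩
  have hsub := faceGen_subset (isFace_spectrahedron_inter_mulVec_eq_zero L b _) hKK
  rw [vectorSpan_def, Submodule.span_le]
  rintro _ ⟨A, hA, B, hB, rfl⟩
  obtain ⟨⟨hA, hLA⟩, hAker⟩ := hsub hA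
  obtain ⟨⟨hB, hLB⟩, hBker⟩ := hsub hB
  obtain ⟨H, hH, hHA⟩ := exists_isHermitian_eq_mul_mul_conjTranspose hK hA.isHermitian hAker
  obtain ⟨G, hG, hGB⟩ := exists_isHermitian_eq_mul_mul_conjTranspose hK hB.isHermitian hBker
  have hdiff : congruence K (H - G) = A - B := by
    rw [map_sub, congruence_apply, congruence_apply, hHA, hGB]
  refine ⟨H - G, ⟨hH.sub hG, ?_⟩, hdiff⟩
  rw [SetLike.mem_coe, LinearMap.mem_ker, LinearMap.comp_apply, hdiff, map_sub, hLA, hLB, sub_self]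

lemma le_vectorSpan_faceGen_spectrahedron [Finite m] (hb : L (K * Kᴴ) = b) :
    (selfAdjoint.submodule ℝ (Matrix r r ℂ) ⊓ LinearMap.ker (L ∘ₗ congruence K)).map
      (congruence K) ≤ vectorSpan ℝ (faceGen (spectrahedron L b) (K * Kᴴ)) := by
  classical
  rintro _ ⟨H, ⟨hH, hLH⟩, rfl⟩
  replace hLH : L (congruence K H) = 0 := hLH
  obtain ⟨ε, hε, hadd, hsub⟩ := exists_pos_posSemidef_one_add_smul_one_sub_smul hH
  have hKadd : K * Kᴴ + ε • congruence K H ∈ spectrahedron L b := by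
    refine ⟨?_, by rw [map_add, map_smul, hLH, hb, smul_zero, add_zero]⟩
    simpa [congruence_apply, Matrix.mul_add, Matrix.add_mul] using hadd.mul_mul_conjTranspose_same K
  have hKsub : K * Kᴴ - ε • congruence K H ∈ spectrahedron L b := by
    refine ⟨?_, by rw [map_sub, map_smul, hLH, hb, smul_zero, sub_zero]⟩
    simpa [congruence_apply, Matrix.mul_sub, Matrix.sub_mul] using hsub.mul_mul_conjTranspose_same K
  exact (Submodule.smul_mem_iff _ hε.ne').1
    (mem_vectorSpan_faceGen_of_add_mem_of_sub_mem hKadd hKsub)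

theorem faceDim_faceGen_spectrahedron [Finite m] (hK : LinearIndependent ℂ K.col)
    (hb : L (K * Kᴴ) = b) :
    faceDim (faceGen (spectrahedron L b) (K * Kᴴ)) = Module.finrank ℝ
      ↥(selfAdjoint.submodule ℝ (Matrix r r ℂ) ⊓ LinearMap.ker (L ∘ₗ congruence K)) := by
  rw [faceDim, (vectorSpan_faceGen_spectrahedron_le hK hb).antisymm
    (le_vectorSpan_faceGen_spectrahedron hb)]
  exact (Submodule.equivMapOfInjective _ (congruence_injective hK) _).finrank_eq.symm

end Spectrahedron

section Kraus

variable {ι κ ρ : Type*}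

/-- The matrix of block traces `(tr A_{ij})_{ij}` of a block matrix `A`, the index of an entry
being (block, position inside the block). -/
def blockTrace (ι κ : Type*) [Fintype κ] :
    Matrix (ι × κ) (ι × κ) ℂ →ₗ[ℝ] Matrix ι ι ℂ where
  toFun A := of fun i j => ∑ k, A (i, k) (j, k)
  map_add' A B := by ext; simp [Finset.sum_add_distrib]
  map_smul' c A := by ext; simp [Finset.mul_sum]

lemma Cset_eq_spectrahedron (n : ℕ) : Cset n = spectrahedron (blockTrace (Fin n) (Fin n)) 1 := by
  ext A
  simp only [Cset, spectrahedron, Set.mem_ofPred_eq, ← Matrix.ext_iff, one_apply]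
  rfl

/-- The matrix whose columns are the vectorizations of the Kraus operators `K a`; it is the factor
of the Choi matrix through which faces are computed. -/
def krausColumns (K : ρ → Matrix κ ι ℂ) : Matrix (ι × κ) ρ ℂ :=
  (of fun a => (K a).vec)ᵀ

lemma linearIndependent_col_krausColumns {K : ρ → Matrix κ ι ℂ} (hK : LinearIndependent ℂ K) :
    LinearIndependent ℂ (krausColumns K).col :=
  let vecLin : Matrix κ ι ℂ →ₗ[ℂ] ι × κ → ℂ :=
    { toFun := vec, map_add' := vec_add, map_smul' := vec_smul }
  hK.map_injOn vecLin vec_bijective.injective.injOn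

variable [Fintype ρ]

/-- The Choi matrix of the channel `X ↦ ∑ a, K a * X * (K a)ᴴ`, given by its Kraus operators. -/
def choiMatrix (K : ρ → Matrix κ ι ℂ) : Matrix (ι × κ) (ι × κ) ℂ :=
  krausColumns K * (krausColumns K)ᴴ

variable [Fintype κ]

/-- The real-linear map `H ↦ ∑ a b, H a b • (K b)ᴴ * K a`. On Hermitian `H` it vanishes exactly
along the directions in which the Choi matrix of `K` can be perturbed. -/
def krausForm (K : ρ → Matrix κ ι ℂ) : Matrix ρ ρ ℂ →ₗ[ℝ] Matrix ι ι ℂ where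
  toFun H := ∑ a, ∑ b, H a b • ((K b)ᴴ * K a)
  map_add' H G := by simp only [Matrix.add_apply, add_smul, Finset.sum_add_distrib]
  map_smul' c H := by simp only [Matrix.smul_apply, smul_assoc, Finset.smul_sum, RingHom.id_apply]

lemma krausForm_apply (K : ρ → Matrix κ ι ℂ) (H : Matrix ρ ρ ℂ) :
    krausForm K H = ∑ a, ∑ b, H a b • ((K b)ᴴ * K a) := rfl

lemma krausForm_one [DecidableEq ρ] (K : ρ → Matrix κ ι ℂ) :
    krausForm K 1 = ∑ a, (K a)ᴴ * K a := by
  simp [krausForm_apply, one_apply, ite_smul]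

lemma blockTrace_congruence_krausColumns (K : ρ → Matrix κ ι ℂ) (H : Matrix ρ ρ ℂ) :
    blockTrace ι κ (congruence (krausColumns K) H) = (krausForm K H)ᵀ := by
  ext i j
  calc ∑ k, ∑ b, (∑ a, K a k i * H a b) * star (K b k j)
      = ∑ k, ∑ b, ∑ a, H a b * (star (K b k j) * K a k i) := by
        simp only [Finset.sum_mul]
        congr! 3
        ring
    _ = ∑ a, ∑ b, ∑ k, H a b * (star (K b k j) * K a k i) := by
        rw [Finset.sum_comm_cycle]
        exact Finset.sum_congr rfl fun a _ => Finset.sum_comm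
    _ = (krausForm K H)ᵀ i j := by
        simp only [krausForm_apply, transpose_apply, Matrix.sum_apply, Matrix.smul_apply,
          smul_eq_mul, mul_apply, conjTranspose_apply, Finset.mul_sum]

variable {n : ℕ}

lemma blockTrace_choiMatrix [DecidableEq ι] {K : ρ → Matrix κ ι ℂ} (hTP : ∑ a, (K a)ᴴ * K a = 1) :
    blockTrace ι κ (choiMatrix K) = 1 := by
  classical
  simpa [congruence_apply, choiMatrix, krausForm_one, hTP] using
    blockTrace_congruence_krausColumns K 1

lemma choiMatrix_mem_Cset {K : ρ → Matrix (Fin n) (Fin n) ℂ} (hTP : ∑ a, (K a)ᴴ * K a = 1) :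
    choiMatrix K ∈ Cset n := by
  rw [Cset_eq_spectrahedron]
  exact ⟨posSemidef_self_mul_conjTranspose _, blockTrace_choiMatrix hTP⟩

lemma rank_choiMatrix [Fintype ι] {K : ρ → Matrix κ ι ℂ} (hK : LinearIndependent ℂ K) :
    (choiMatrix K).rank = Fintype.card ρ := by
  rw [choiMatrix, rank_self_mul_conjTranspose, rank_eq_finrank_span_cols,
    finrank_span_eq_card (linearIndependent_col_krausColumns hK)]

theorem faceDim_faceGen_choiMatrix {K : ρ → Matrix (Fin n) (Fin n) ℂ} (hK : LinearIndependent ℂ K)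
    (hTP : ∑ a, (K a)ᴴ * K a = 1) :
    faceDim (faceGen (Cset n) (choiMatrix K)) = Module.finrank ℝ
      ↥(selfAdjoint.submodule ℝ (Matrix ρ ρ ℂ) ⊓ LinearMap.ker (krausForm K)) := by
  have hker : LinearMap.ker (blockTrace _ _ ∘ₗ congruence (krausColumns K)) =
      LinearMap.ker (krausForm K) := by
    ext H
    simp [blockTrace_congruence_krausColumns, transpose_eq_zero]
  rw [Cset_eq_spectrahedron, choiMatrix,
    faceDim_faceGen_spectrahedron (linearIndependent_col_krausColumns hK)
      (blockTrace_choiMatrix hTP), hker]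

end Kraus

section Separated

variable {ι κ ρ : Type*} [Fintype ι]

/-- Every operator of the family `K` is the only one not to vanish at some vector. -/
def IsSeparated (K : ρ → Matrix κ ι ℂ) : Prop :=
  ∀ a, ∃ u, K a *ᵥ u ≠ 0 ∧ ∀ b ≠ a, K b *ᵥ u = 0

lemma isSeparated_pair {V W : Matrix κ ι ℂ} {u v : ι → ℂ} (hVu : V *ᵥ u ≠ 0)
    (hWu : W *ᵥ u = 0) (hWv : W *ᵥ v ≠ 0) (hVv : V *ᵥ v = 0) : IsSeparated ![V, W] := by
  intro a
  fin_cases a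
  · exact ⟨u, hVu, by simp [Fin.forall_fin_two, hWu]⟩
  · exact ⟨v, hWv, by simp [Fin.forall_fin_two, hVv]⟩

variable {K : ρ → Matrix κ ι ℂ}

lemma IsSeparated.linearIndependent [Finite ρ] (hK : IsSeparated K) :
    LinearIndependent ℂ K := by
  cases nonempty_fintype ρ
  refine Fintype.linearIndependent_iff.2 fun c hc a => ?_
  obtain ⟨u, hau, hbu⟩ := hK a
  have hcu : c a • K a *ᵥ u = 0 := by
    calc c a • K a *ᵥ u = ∑ b, c b • K b *ᵥ u := by
          rw [Fintype.sum_eq_single a fun b hb => by rw [hbu b hb, smul_zero]]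
      _ = (∑ b, c b • K b) *ᵥ u := by simp only [sum_mulVec, smul_mulVec]
      _ = 0 := by rw [hc, zero_mulVec]
  exact (smul_eq_zero_iff_left hau).1 hcu

variable [Fintype κ] [Fintype ρ]

lemma star_dotProduct_krausForm_mulVec (K : ρ → Matrix κ ι ℂ) (H : Matrix ρ ρ ℂ) (u : ι → ℂ) :
    star u ⬝ᵥ krausForm K H *ᵥ u = ∑ a, ∑ b, H a b * (star (K b *ᵥ u) ⬝ᵥ K a *ᵥ u) := by
  simp only [krausForm_apply, sum_mulVec, smul_mulVec, dotProduct_sum, dotProduct_smul,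
    smul_eq_mul, ← mulVec_mulVec, dotProduct_mulVec, star_mulVec]

lemma IsSeparated.diag_eq_zero_of_krausForm_eq_zero (hK : IsSeparated K) {H : Matrix ρ ρ ℂ}
    (hH : krausForm K H = 0) (a : ρ) : H a a = 0 := by
  obtain ⟨u, hau, hbu⟩ := hK a
  have hform := star_dotProduct_krausForm_mulVec K H u
  rw [hH, zero_mulVec, dotProduct_zero,
    Fintype.sum_eq_single a fun b hb => by simp [hbu b hb],
    Fintype.sum_eq_single a fun b hb => by simp [hbu b hb]] at hform
  exact (mul_eq_zero.1 hform.symm).resolve_right (dotProduct_star_self_eq_zero.not.2 hau)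

end Separated

section SkewMultipliers

variable {M : Type*} [AddCommGroup M] [StarAddMonoid M] [Module ℂ M] [StarModule ℂ M]

/-- The complex numbers `z` for which `z • T` is skew-adjoint. -/
def skewMultipliers (T : M) : Submodule ℝ ℂ :=
  (skewAdjoint.submodule ℝ M).comap ((LinearMap.toSpanSingleton ℂ M T).restrictScalars ℝ)

lemma mem_skewMultipliers {T : M} {z : ℂ} : z ∈ skewMultipliers T ↔ star (z • T) = -(z • T) :=
  Iff.rfl

lemma finrank_skewMultipliers_zero : Module.finrank ℝ (skewMultipliers (0 : M)) = 2 := by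
  have htop : skewMultipliers (0 : M) = ⊤ := by
    ext z
    simp [mem_skewMultipliers]
  rw [htop, finrank_top, Complex.finrank_real_complex]

lemma finrank_skewMultipliers_of_isSelfAdjoint {T : M} (hT : IsSelfAdjoint T) (hT0 : T ≠ 0) :
    Module.finrank ℝ (skewMultipliers T) = 1 := by
  have hspan : skewMultipliers T = Submodule.span ℝ {Complex.I} := by
    ext z
    rw [mem_skewMultipliers, star_smul, hT.star_eq, ← neg_smul, smul_left_inj hT0,
      Submodule.mem_span_singleton]
    constructor
    · intro hz
      have hre : z.re = 0 := by
        have hre_neg := congrArg Complex.re hz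
        simp only [Complex.star_def, Complex.conj_re, Complex.neg_re] at hre_neg
        linarith
      exact ⟨z.im, Complex.ext (by simp [hre]) (by simp)⟩
    · rintro ⟨c, rfl⟩
      simp
  rw [hspan, finrank_span_singleton Complex.I_ne_zero]

lemma finrank_skewMultipliers_of_mul_self_eq_zero {ι : Type*} [Fintype ι] {T : Matrix ι ι ℂ}
    (hT : T * T = 0) (hT0 : T ≠ 0) : Module.finrank ℝ (skewMultipliers T) = 0 := by
  refine Submodule.finrank_eq_zero.2 (eq_bot_iff.2 fun z hz => ?_)
  rw [mem_skewMultipliers, star_eq_conjTranspose] at hz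
  have hzz : z • (Tᴴ * T) = 0 := by
    have hTT : Tᴴ * Tᴴ = 0 := by rw [← conjTranspose_mul, hT, conjTranspose_zero]
    rw [← Matrix.mul_smul, ← neg_eq_zero, ← Matrix.mul_neg, ← hz, conjTranspose_smul,
      Matrix.mul_smul, hTT, smul_zero]
  exact (smul_eq_zero.1 hzz).resolve_right (conjTranspose_mul_self_eq_zero.not.2 hT0)

end SkewMultipliers

section MatrixUnits

variable {ι R : Type*} [DecidableEq ι]

lemma isStarProjection_single_one [Fintype ι] [Semiring R] [StarRing R] (i : ι) :
    IsStarProjection (single i i 1 : Matrix ι ι R) where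
  isIdempotentElem := by simp [IsIdempotentElem]
  isSelfAdjoint := by simp [IsSelfAdjoint, star_eq_conjTranspose]

variable [Zero R] [One R] [NeZero (1 : R)]

lemma single_one_ne_zero (i : ι) : single i i 1 ≠ (0 : Matrix ι ι R) := fun h => by
  simpa using congrFun₂ h i i

lemma single_ne_one {i j : ι} (hij : i ≠ j) (z : R) : single i i z ≠ (1 : Matrix ι ι R) :=
  fun h => by simpa [hij] using congrFun₂ h j j

end MatrixUnits

section KrausPairs

/-- The real-linear map sending `z` to the Hermitian `2 × 2` matrix with zero diagonal and lower
left entry `z`. -/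
def offDiagonal : ℂ →ₗ[ℝ] Matrix (Fin 2) (Fin 2) ℂ where
  toFun z := !![0, star z; z, 0]
  map_add' z w := by ext i j; fin_cases i <;> fin_cases j <;> simp
  map_smul' c z := by ext i j; fin_cases i <;> fin_cases j <;> simp

lemma offDiagonal_injective : Function.Injective offDiagonal := fun _ _ h => congrFun₂ h 1 0

lemma isHermitian_offDiagonal (z : ℂ) : (offDiagonal z).IsHermitian := by
  ext i j
  fin_cases i <;> fin_cases j <;> simp [offDiagonal]

lemma eq_offDiagonal {H : Matrix (Fin 2) (Fin 2) ℂ} (hH : H.IsHermitian)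
    (hdiag : ∀ a, H a a = 0) : H = offDiagonal (H 1 0) := by
  ext i j
  fin_cases i <;> fin_cases j
  · simpa [offDiagonal] using hdiag 0
  · simpa [offDiagonal] using (hH.apply 0 1).symm
  · simp [offDiagonal]
  · simpa [offDiagonal] using hdiag 1

variable {ι κ : Type*} [Fintype κ]

lemma krausForm_offDiagonal_eq_zero_iff (V W : Matrix κ ι ℂ) (z : ℂ) :
    krausForm ![V, W] (offDiagonal z) = 0 ↔ z ∈ skewMultipliers (Vᴴ * W) := by
  have hform : krausForm ![V, W] (offDiagonal z) = star (z • (Vᴴ * W)) + z • (Vᴴ * W) := by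
    simp [krausForm_apply, offDiagonal, star_eq_conjTranspose]
  rw [hform, mem_skewMultipliers, add_eq_zero_iff_eq_neg]

lemma selfAdjoint_inf_ker_krausForm_pair [Fintype ι] {V W : Matrix κ ι ℂ}
    (hVW : IsSeparated ![V, W]) :
    selfAdjoint.submodule ℝ (Matrix (Fin 2) (Fin 2) ℂ) ⊓ LinearMap.ker (krausForm ![V, W]) =
      (skewMultipliers (Vᴴ * W)).map offDiagonal := by
  apply le_antisymm
  · rintro H ⟨hH, hker⟩
    have hoff := eq_offDiagonal hH (hVW.diag_eq_zero_of_krausForm_eq_zero hker)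
    exact ⟨H 1 0, (krausForm_offDiagonal_eq_zero_iff V W _).1 (hoff ▸ hker), hoff.symm⟩
  · rintro _ ⟨z, hz, rfl⟩
    exact ⟨isHermitian_offDiagonal z, (krausForm_offDiagonal_eq_zero_iff V W z).2 hz⟩

variable {n : ℕ}

theorem exists_rank_two_faceDim_eq_finrank_skewMultipliers {V W : Matrix (Fin n) (Fin n) ℂ}
    (hTP : Vᴴ * V + Wᴴ * W = 1) (hVW : IsSeparated ![V, W]) :
    ∃ A ∈ Cset n, A.rank = 2 ∧
      faceDim (faceGen (Cset n) A) = Module.finrank ℝ (skewMultipliers (Vᴴ * W)) := by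
  have hTP' : ∑ a, (![V, W] a)ᴴ * ![V, W] a = 1 := by simpa [Fin.sum_univ_two] using hTP
  refine ⟨_, choiMatrix_mem_Cset hTP', rank_choiMatrix hVW.linearIndependent, ?_⟩
  rw [faceDim_faceGen_choiMatrix hVW.linearIndependent hTP', selfAdjoint_inf_ker_krausForm_pair hVW]
  exact (Submodule.equivMapOfInjective _ offDiagonal_injective _).finrank_eq.symm

lemma isSeparated_isStarProjection_pair [Fintype ι] [DecidableEq ι] {P U : Matrix ι ι ℂ}
    (hP : IsStarProjection P) (hP0 : P ≠ 0) (hP1 : P ≠ 1) (hU : Uᴴ * U = 1) :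
    IsSeparated ![P, U * (1 - P)] := by
  obtain ⟨u, hu⟩ : ∃ u, P *ᵥ u ≠ 0 := by
    contrapose! hP0
    exact ext_of_mulVec_single fun i => by rw [hP0, zero_mulVec]
  obtain ⟨v, hv⟩ : ∃ v, (1 - P) *ᵥ v ≠ 0 := by
    contrapose! hP1
    exact (sub_eq_zero.1 (ext_of_mulVec_single fun i => by rw [hP1, zero_mulVec])).symm
  refine isSeparated_pair (u := P *ᵥ u) (v := (1 - P) *ᵥ v) ?_ ?_ ?_ ?_
  · rwa [mulVec_mulVec, hP.isIdempotentElem.eq]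
  · rw [mulVec_mulVec, Matrix.mul_assoc, hP.one_sub_mul_self, Matrix.mul_zero, zero_mulVec]
  · rw [mulVec_mulVec, Matrix.mul_assoc, hP.one_sub.isIdempotentElem.eq, ← mulVec_mulVec]
    contrapose! hv
    calc (1 - P) *ᵥ v = Uᴴ *ᵥ U *ᵥ (1 - P) *ᵥ v := by rw [mulVec_mulVec _ Uᴴ, hU, one_mulVec]
      _ = 0 := by rw [hv, mulVec_zero]
  · rw [mulVec_mulVec, hP.mul_one_sub_self, zero_mulVec]

theorem exists_rank_two_faceDim_of_isStarProjection {P U : Matrix (Fin n) (Fin n) ℂ}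
    (hP : IsStarProjection P) (hP0 : P ≠ 0) (hP1 : P ≠ 1) (hU : Uᴴ * U = 1) :
    ∃ A ∈ Cset n, A.rank = 2 ∧
      faceDim (faceGen (Cset n) A) = Module.finrank ℝ (skewMultipliers (P * U * (1 - P))) := by
  have hPstar : Pᴴ = P := hP.isSelfAdjoint
  have hQstar : (1 - P)ᴴ = 1 - P := hP.one_sub.isSelfAdjoint
  have hTP : Pᴴ * P + (U * (1 - P))ᴴ * (U * (1 - P)) = 1 := by
    calc Pᴴ * P + (U * (1 - P))ᴴ * (U * (1 - P))
        = P * P + (1 - P) * (Uᴴ * U) * (1 - P) := by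
          simp only [conjTranspose_mul, hPstar, hQstar, Matrix.mul_assoc]
      _ = 1 := by
          rw [hU, Matrix.mul_one, hP.isIdempotentElem.eq, hP.one_sub.isIdempotentElem.eq,
            add_sub_cancel]
  have hT : Pᴴ * (U * (1 - P)) = P * U * (1 - P) := by rw [hPstar, Matrix.mul_assoc]
  exact hT ▸ exists_rank_two_faceDim_eq_finrank_skewMultipliers hTP
    (isSeparated_isStarProjection_pair hP hP0 hP1 hU)

theorem exists_rank_two_faceDim_eq_one_of_diagonal {x y : Fin n → ℝ}
    (hxy : ∀ i, x i ^ 2 + y i ^ 2 = 1) {i j k : Fin n} (hi : y i = 0) (hj : x j = 0)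
    (hk : x k * y k ≠ 0) :
    ∃ A ∈ Cset n, A.rank = 2 ∧ faceDim (faceGen (Cset n) A) = 1 := by
  let V : Matrix (Fin n) (Fin n) ℂ := diagonal fun l => (x l : ℂ)
  let W : Matrix (Fin n) (Fin n) ℂ := diagonal fun l => (y l : ℂ)
  have hTP : Vᴴ * V + Wᴴ * W = 1 := by
    rw [← diagonal_one]
    simp only [V, W, diagonal_conjTranspose, diagonal_mul_diagonal, diagonal_add]
    congr 1 with l
    simpa [← sq] using mod_cast hxy l
  have hsep : IsSeparated ![V, W] := by
    have hxi : x i ≠ 0 := fun h => by simpa [h, hi] using hxy i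
    have hyj : y j ≠ 0 := fun h => by simpa [h, hj] using hxy j
    refine isSeparated_pair (u := Pi.single i 1) (v := Pi.single j 1) ?_ ?_ ?_ ?_ <;>
      simp [V, W, hi, hj, hxi, hyj]
  have hT : Vᴴ * W = diagonal fun l => ((x l * y l : ℝ) : ℂ) := by
    simp [V, W, diagonal_conjTranspose]
  have hTsa : IsSelfAdjoint (Vᴴ * W) := by
    rw [hT, isSelfAdjoint_iff, star_eq_conjTranspose, diagonal_conjTranspose]
    congr 1 with l
    simp
  have hT0 : Vᴴ * W ≠ 0 := by
    rw [hT, Ne, diagonal_eq_zero]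
    exact fun h => hk (Complex.ofReal_eq_zero.1 (congrFun h k))
  simpa only [finrank_skewMultipliers_of_isSelfAdjoint hTsa hT0] using
    exists_rank_two_faceDim_eq_finrank_skewMultipliers hTP hsep

theorem exists_rank_two_faceDim_eq_two {i j : Fin n} (hij : i ≠ j) :
    ∃ A ∈ Cset n, A.rank = 2 ∧ faceDim (faceGen (Cset n) A) = 2 := by
  have hP := isStarProjection_single_one (R := ℂ) i
  have hface := exists_rank_two_faceDim_of_isStarProjection hP (single_one_ne_zero i)
    (single_ne_one hij 1) (U := 1) (by simp)
  rwa [Matrix.mul_one, hP.mul_one_sub_self, finrank_skewMultipliers_zero] at hface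

theorem exists_rank_two_faceDim_eq_zero {i j : Fin n} (hij : i ≠ j) :
    ∃ A ∈ Cset n, A.rank = 2 ∧ faceDim (faceGen (Cset n) A) = 0 := by
  let P : Matrix (Fin n) (Fin n) ℂ := single i i 1
  let U : Matrix (Fin n) (Fin n) ℂ := (Equiv.swap i j).permMatrix ℂ
  have hP : IsStarProjection P := isStarProjection_single_one i
  have hU : Uᴴ * U = 1 := by simp [U, conjTranspose_permMatrix, ← permMatrix_mul]
  have hT0 : P * U * (1 - P) ≠ 0 := fun h => by
    simpa [P, U, hij, hij.symm, Matrix.mul_sub] using congrFun₂ h i j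
  have hTT : P * U * (1 - P) * (P * U * (1 - P)) = 0 := by
    calc P * U * (1 - P) * (P * U * (1 - P)) = P * U * ((1 - P) * P) * U * (1 - P) := by
          simp only [Matrix.mul_assoc]
      _ = 0 := by
          simp only [hP.one_sub_mul_self, Matrix.mul_zero, Matrix.zero_mul]
  simpa only [finrank_skewMultipliers_of_mul_self_eq_zero hTT hT0] using
    exists_rank_two_faceDim_of_isStarProjection hP (single_one_ne_zero i) (single_ne_one hij 1) hU

theorem exists_rank_two_faceDim_eq_one (m : ℕ) :
    ∃ A ∈ Cset (m + 3), A.rank = 2 ∧ faceDim (faceGen (Cset (m + 3)) A) = 1 := by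
  refine exists_rank_two_faceDim_eq_one_of_diagonal (x := vecCons 1 (vecCons 0 fun _ => 3 / 5))
    (y := vecCons 0 (vecCons 1 fun _ => 4 / 5)) (i := 0) (j := 1) (k := 2) ?_ ?_ ?_ ?_
  · norm_num [Fin.forall_fin_succ]
  · simp
  · simp
  · simp

end KrausPairs

/-- For every `n ≥ 3` and every `d ∈ {0,1,2}` there is a rank-2 matrix in `C_n`
generating a face of dimension exactly `d`. -/
theorem exists_rank_two_face_of_dim (n : ℕ) (hn : 3 ≤ n) (d : ℕ)
    (hd : d ∈ ({0, 1, 2} : Set ℕ)) :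
    ∃ A : Matrix (Fin n × Fin n) (Fin n × Fin n) ℂ,
      A ∈ Cset n ∧ A.rank = 2 ∧ faceDim (faceGen (Cset n) A) = d := by
  obtain ⟨m, rfl⟩ := Nat.exists_eq_add_of_le' hn
  have h01 : (0 : Fin (m + 3)) ≠ 1 := by simp
  rcases hd with rfl | rfl | rfl
  · exact exists_rank_two_faceDim_eq_zero h01
  · exact exists_rank_two_faceDim_eq_one m
  · exact exists_rank_two_faceDim_eq_two h01
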